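/- Let K = {1, 2, ..., k} and let P(y) denote the largest primorial not exceeding y. Then the singular series S({0} ∪ P((log x)^{1/2}) · K) is ≫ (log log log x)^k as x → ∞, where P(y)·K = {P(y), 2P(y), ..., kP(y)}. -/

import Mathlib

open Finset

/-- Number of residue classes mod `p` occupied by the elements of `D`. -/
def nu (D : Finset ℕ) (p : ℕ) : ℕ := (D.image (· % p)).card

/-- The Hardy–Littlewood singular series of a finite set `D`. -/
noncomputable def singSeries (D : Finset ℕ) : ℝ :=
  ∏' p : Nat.Primes, ((1 - 1 / ((p : ℕ) : ℝ)) ^ D.card)⁻¹ * (1 - (nu D (p : ℕ) : ℝ) / ((p : ℕ) : ℝ))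

/-- `primePi x D` counts positive integers `m ≤ x` with `m + d` prime for all `d ∈ D`. -/
noncomputable def primePi (x : ℝ) (D : Finset ℕ) : ℕ :=
  {m : ℕ | 0 < m ∧ (m : ℝ) ≤ x ∧ ∀ d ∈ D, Nat.Prime (m + d)}.ncard

/-- `Ncham x D` counts `n` such that `p_{n+k} ≤ x` and the gaps `p_{n+i} - p_n` for
`i = 1, …, k` are exactly the elements of `D` (with `k = D.card`). -/
noncomputable def Ncham (x : ℝ) (D : Finset ℕ) : ℕ :=
  {n : ℕ | ((Nat.nth Nat.Prime (n + D.card) : ℝ) ≤ x) ∧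
    (Finset.range D.card).image
      (fun i => Nat.nth Nat.Prime (n + i + 1) - Nat.nth Nat.Prime n) = D}.ncard

/-- `D` is a `k`-tuple jumping champion for `x`. -/
def IsChampion (k : ℕ) (x : ℝ) (D : Finset ℕ) : Prop :=
  D.card = k ∧ (∀ d ∈ D, 0 < d) ∧
    ∀ D' : Finset ℕ, D'.card = k → (∀ d ∈ D', 0 < d) → Ncham x D' ≤ Ncham x D

/-- Number of prime factors counted with multiplicity. -/
def bigOmega (n : ℕ) : ℕ := n.primeFactorsList.length

/-- The `n`-th primorial `2·3·5⋯p_n`. -/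
noncomputable def primorial' (n : ℕ) : ℕ := ∏ i ∈ Finset.range n, Nat.nth Nat.Prime i

/-- The largest primorial not exceeding `y` (equal to `1` if `y < 1`). -/
noncomputable def largestPrimorial (y : ℝ) : ℕ :=
  primorial' (sSup {n : ℕ | (primorial' n : ℝ) ≤ y})

/-!
Suppose all elements of a set `D` of `k + 1` integers are congruent modulo every prime `p ≤ z`.
The Euler factors of the singular series at these primes are `(1 - 1/p)^{-k}`, and their product is
at least `(log z)^k`, since expanding `∏_{p ≤ z} (1 - 1/p)^{-1}` produces every `1/a` with `a ≤ z`.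
At a larger prime the factor is smallest when the elements of `D` are distinct modulo `p`, where
Bernoulli's inequality bounds it below by `1 - (k+1)²/p²`; once `z ≥ 4(k+1)²` these factors
together lose at most a factor of `2`.

For `D = {0} ∪ P(y)·K` one may take `z = (log y)/2`: if `P(y)` is the product of the primes below
`q`, then `y` is less than the product of the primes up to `q`, which is at most `4^q`. Hence every
prime `p` with `4^p ≤ y` divides `P(y)`.
-/

open Filter
open Nat (primesLE)

lemma one_sub_sum_le_prod_one_sub {ι R : Type*} [CommRing R] [LinearOrder R]
    [IsStrictOrderedRing R] (s : Finset ι) {f : ι → R} (hf₀ : ∀ i ∈ s, 0 ≤ f i)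
    (hf₁ : ∀ i ∈ s, f i ≤ 1) : 1 - ∑ i ∈ s, f i ≤ ∏ i ∈ s, (1 - f i) := by
  induction s using Finset.cons_induction with
  | empty => simp
  | cons a s ha ih =>
    rw [forall_mem_cons] at hf₀ hf₁
    rw [sum_cons, prod_cons]
    have prod_le_one : ∏ i ∈ s, (1 - f i) ≤ 1 :=
      Finset.prod_le_one (fun i hi => sub_nonneg.2 (hf₁.2 i hi))
        fun i hi => sub_le_self 1 (hf₀.2 i hi)
    linarith [ih hf₀.2 hf₁.2, mul_le_mul_of_nonneg_left prod_le_one hf₀.1]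

lemma sum_inv_sq_le_of_forall_lt {A : Finset ℕ} {k : ℕ} (hA : ∀ a ∈ A, k < a) :
    ∑ a ∈ A, ((a : ℝ) ^ 2)⁻¹ ≤ 2 / (k + 1) := by
  have hsub : A ⊆ Ioo k (A.sup id + 1) := fun a ha =>
    mem_Ioo.2 ⟨hA a ha, Nat.lt_succ_of_le (le_sup (f := id) ha)⟩
  exact (sum_le_sum_of_subset_of_nonneg hsub fun _ _ _ => by positivity).trans
    (sum_Ioo_inv_sq_le k _)

lemma one_sub_sq_le_inv_one_sub_pow_mul {m : ℕ} {t : ℝ} (ht₀ : 0 ≤ t) (ht₁ : t < 1)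
    (hmt : m * t ≤ 1) : 1 - (m * t) ^ 2 ≤ ((1 - t) ^ m)⁻¹ * (1 - m * t) := by
  have inv_ge : (1 + t) ^ m ≤ ((1 - t) ^ m)⁻¹ := by
    rw [← one_div, le_div_iff₀ (pow_pos (sub_pos.2 ht₁) m), ← mul_pow]
    exact pow_le_one₀ (mul_nonneg (by linarith) (by linarith)) (by nlinarith)
  calc 1 - (m * t) ^ 2 = (1 + m * t) * (1 - m * t) := by ring
    _ ≤ ((1 - t) ^ m)⁻¹ * (1 - m * t) :=
        mul_le_mul_of_nonneg_right
          ((one_add_mul_le_pow (by linarith) m).trans inv_ge) (sub_nonneg.2 hmt)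

lemma inv_one_sub_pow_mul_le_one {m : ℕ} {t : ℝ} (ht : t < 1) :
    ((1 - t) ^ m)⁻¹ * (1 - m * t) ≤ 1 := by
  rw [inv_mul_le_one₀ (pow_pos (sub_pos.2 ht) m)]
  simpa only [mul_neg, ← sub_eq_add_neg] using one_add_mul_le_pow (a := -t) (by linarith) m

lemma harmonic_le_prod_primesLE (n : ℕ) :
    (harmonic n : ℝ) ≤ ∏ p ∈ primesLE n, (1 - 1 / (p : ℝ))⁻¹ := by
  let f : ℕ →* ℝ := invMonoidWithZeroHom.toMonoidHom.comp (Nat.castRingHom ℝ).toMonoidHom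
  have norm_lt_one {p : ℕ} (hp : p.Prime) : ‖f p‖ < 1 := by
    change ‖((p : ℝ))⁻¹‖ < 1
    rw [norm_inv, RCLike.norm_natCast]
    exact inv_lt_one_of_one_lt₀ (by exact_mod_cast hp.one_lt)
  have hasSum_smooth : HasSum (fun a : (n + 1).smoothNumbers => ((a : ℕ) : ℝ)⁻¹)
      (∏ p ∈ primesLE n, (1 - (p : ℝ)⁻¹)⁻¹) :=
    (EulerProduct.summable_and_hasSum_smoothNumbers_prod_primesBelow_geometric norm_lt_one
      (n + 1)).2
  have mem_smooth : ∀ a ∈ Icc 1 n, a ∈ (n + 1).smoothNumbers := fun a ha =>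
    Nat.mem_smoothNumbers_of_lt (mem_Icc.1 ha).1 (Nat.lt_succ_of_le (mem_Icc.1 ha).2)
  simp only [one_div]
  calc (harmonic n : ℝ) = ∑ a ∈ Icc 1 n, (a : ℝ)⁻¹ := by
        rw [harmonic_eq_sum_Icc]; push_cast; rfl
    _ = ∑ a ∈ (Icc 1 n).subtype (· ∈ (n + 1).smoothNumbers), ((a : ℕ) : ℝ)⁻¹ :=
        (sum_subtype_of_mem (fun a : ℕ => (a : ℝ)⁻¹) mem_smooth).symm
    _ ≤ _ := sum_le_hasSum _ (fun _ _ => by positivity) hasSum_smooth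

lemma log_le_prod_primesLE_floor {z : ℝ} (hz : 0 ≤ z) :
    Real.log z ≤ ∏ p ∈ primesLE ⌊z⌋₊, (1 - 1 / (p : ℝ))⁻¹ :=
  (log_le_harmonic_floor z hz).trans (harmonic_le_prod_primesLE _)

lemma nu_le_card (D : Finset ℕ) (p : ℕ) : nu D p ≤ #D :=
  card_image_le

lemma nu_eq_card_of_forall_lt {D : Finset ℕ} {p : ℕ} (hD : ∀ d ∈ D, d < p) : nu D p = #D :=
  card_image_of_injOn fun a ha b hb h => Nat.ModEq.eq_of_lt_of_lt h (hD a ha) (hD b hb)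

lemma nu_eq_one_of_forall_dvd {D : Finset ℕ} {p : ℕ} (hD : D.Nonempty) (h : ∀ d ∈ D, p ∣ d) :
    nu D p = 1 := by
  have image_eq : D.image (· % p) = D.image fun _ => 0 :=
    image_congr fun d hd => Nat.mod_eq_zero_of_dvd (h d hd)
  rw [nu, image_eq, image_const hD, card_singleton]

/-- The Euler factor of the singular series of `D` at `p`, for an arbitrary natural number `p`. -/
noncomputable def singFactor (D : Finset ℕ) (p : ℕ) : ℝ :=
  ((1 - 1 / (p : ℝ)) ^ #D)⁻¹ * (1 - (nu D p : ℝ) / p)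

lemma singSeries_eq_tprod_singFactor (D : Finset ℕ) :
    singSeries D = ∏' p : Nat.Primes, singFactor D p :=
  rfl

lemma one_div_natCast_lt_one {n : ℕ} (hn : 1 < n) : 1 / (n : ℝ) < 1 := by
  rw [one_div]
  exact inv_lt_one_of_one_lt₀ (by exact_mod_cast hn)

lemma singFactor_eq_pow_of_nu_eq_one {D : Finset ℕ} {k p : ℕ} (hD : #D = k + 1) (hp : 1 < p)
    (hnu : nu D p = 1) : singFactor D p = (1 - 1 / (p : ℝ))⁻¹ ^ k := by
  have factor_ne_zero : 1 - 1 / (p : ℝ) ≠ 0 := (sub_pos.2 (one_div_natCast_lt_one hp)).ne'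
  rw [singFactor, hD, hnu, Nat.cast_one, pow_succ, mul_inv, inv_mul_cancel_right₀ factor_ne_zero,
    inv_pow]

lemma one_sub_sq_le_singFactor {D : Finset ℕ} {p : ℕ} (hp : 1 < p) (hD : #D ≤ p) :
    1 - (#D / (p : ℝ)) ^ 2 ≤ singFactor D p := by
  have card_div_le_one : (#D : ℝ) * (1 / p) ≤ 1 := by
    rw [mul_one_div]; exact div_le_one_of_le₀ (by exact_mod_cast hD) (by positivity)
  have nu_le : (nu D p : ℝ) ≤ #D := by exact_mod_cast nu_le_card D p
  calc 1 - (#D / (p : ℝ)) ^ 2 = 1 - (#D * (1 / (p : ℝ))) ^ 2 := by rw [mul_one_div]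
    _ ≤ ((1 - 1 / (p : ℝ)) ^ #D)⁻¹ * (1 - #D * (1 / (p : ℝ))) :=
        one_sub_sq_le_inv_one_sub_pow_mul (by positivity) (one_div_natCast_lt_one hp)
          card_div_le_one
    _ ≤ singFactor D p := by
        rw [mul_one_div, singFactor]
        have : 0 ≤ ((1 - 1 / (p : ℝ)) ^ #D)⁻¹ :=
          inv_nonneg.2 (pow_nonneg (sub_nonneg.2 (one_div_natCast_lt_one hp).le) _)
        gcongr

lemma abs_singFactor_sub_one_le {D : Finset ℕ} {p : ℕ} (hp : 1 < p) (hD : ∀ d ∈ D, d < p) :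
    |singFactor D p - 1| ≤ (#D / (p : ℝ)) ^ 2 := by
  have card_le : #D ≤ p := by
    simpa using card_le_card (fun d hd => mem_range.2 (hD d hd) : D ⊆ range p)
  have le_one : singFactor D p ≤ 1 := by
    rw [singFactor, nu_eq_card_of_forall_lt hD, ← mul_one_div (#D : ℝ)]
    exact inv_one_sub_pow_mul_le_one (one_div_natCast_lt_one hp)
  rw [abs_of_nonpos (sub_nonpos.2 le_one)]
  linarith [one_sub_sq_le_singFactor hp card_le]

lemma multipliable_singFactor (D : Finset ℕ) :
    Multipliable fun p : Nat.Primes => singFactor D p := by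
  have summable_sq : Summable fun n : ℕ => (#D / (n : ℝ)) ^ 2 := by
    simpa only [div_pow, mul_one_div] using
      (Real.summable_one_div_nat_pow.2 one_lt_two).mul_left ((#D : ℝ) ^ 2)
  have summable_sub_one : Summable fun n : ℕ => singFactor D n - 1 := by
    refine summable_sq.of_norm_bounded_eventually_nat ?_
    filter_upwards [eventually_gt_atTop 1, eventually_gt_atTop (D.sup id)] with n hn hDn
    exact abs_singFactor_sub_one_le hn fun d hd => (le_sup (f := id) hd).trans_lt hDn
  have summable_primes : Summable fun p : Nat.Primes => singFactor D p - 1 :=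
    summable_sub_one.comp_injective Nat.Primes.coe_nat_injective
  simpa only [add_sub_cancel] using Real.multipliable_one_add_of_summable summable_primes

lemma half_le_prod_singFactor {D A : Finset ℕ} {n : ℕ} (hn : 4 * #D ^ 2 ≤ n)
    (hA : ∀ p ∈ A, 1 < p) (hnA : ∀ p ∈ A, n < p) : 1 / 2 ≤ ∏ p ∈ A, singFactor D p := by
  have card_le {p : ℕ} (hp : p ∈ A) : #D ≤ p := by
    linarith [hnA p hp, Nat.le_self_pow two_ne_zero #D]
  have sq_le_one {p : ℕ} (hp : p ∈ A) : (#D / (p : ℝ)) ^ 2 ≤ 1 :=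
    pow_le_one₀ (by positivity)
      (div_le_one_of_le₀ (by exact_mod_cast card_le hp) (by positivity))
  have sum_le : ∑ p ∈ A, (#D / (p : ℝ)) ^ 2 ≤ 1 / 2 := by
    have hn' : 4 * (#D : ℝ) ^ 2 ≤ n := by exact_mod_cast hn
    calc ∑ p ∈ A, (#D / (p : ℝ)) ^ 2 = #D ^ 2 * ∑ p ∈ A, ((p : ℝ) ^ 2)⁻¹ := by
          simp only [mul_sum, div_pow, ← div_eq_mul_inv]
      _ ≤ #D ^ 2 * (2 / (n + 1)) := by gcongr; exact sum_inv_sq_le_of_forall_lt hnA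
      _ ≤ 1 / 2 := by
          rw [← mul_div_assoc, div_le_div_iff₀ (by positivity) two_pos]
          linarith
  calc (1 / 2 : ℝ) ≤ 1 - ∑ p ∈ A, (#D / (p : ℝ)) ^ 2 := by linarith
    _ ≤ ∏ p ∈ A, (1 - (#D / (p : ℝ)) ^ 2) :=
        one_sub_sum_le_prod_one_sub A (fun _ _ => by positivity) fun _ => sq_le_one
    _ ≤ ∏ p ∈ A, singFactor D p :=
        prod_le_prod (fun _ hp => sub_nonneg.2 (sq_le_one hp)) fun p hp =>
          one_sub_sq_le_singFactor (hA p hp) (card_le hp)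

lemma log_pow_le_prod_primesLE_singFactor {D : Finset ℕ} {k : ℕ} {z : ℝ} (hD : #D = k + 1)
    (hz : 1 ≤ z) (hnu : ∀ p ∈ primesLE ⌊z⌋₊, nu D p = 1) :
    Real.log z ^ k ≤ ∏ p ∈ primesLE ⌊z⌋₊, singFactor D p := by
  calc Real.log z ^ k ≤ (∏ p ∈ primesLE ⌊z⌋₊, (1 - 1 / (p : ℝ))⁻¹) ^ k :=
        pow_le_pow_left₀ (Real.log_nonneg hz) (log_le_prod_primesLE_floor (by linarith)) k
    _ = ∏ p ∈ primesLE ⌊z⌋₊, singFactor D p := by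
        rw [← prod_pow]
        exact prod_congr rfl fun p hp =>
          (singFactor_eq_pow_of_nu_eq_one hD (Nat.one_lt_of_mem_primesLE hp) (hnu p hp)).symm

theorem half_mul_log_pow_le_singSeries {D : Finset ℕ} {k : ℕ} {z : ℝ} (hD : #D = k + 1)
    (hz : 4 * ((k : ℝ) + 1) ^ 2 ≤ z) (hnu : ∀ p : ℕ, p.Prime → (p : ℝ) ≤ z → nu D p = 1) :
    1 / 2 * Real.log z ^ k ≤ singSeries D := by
  have one_le : 1 ≤ z := by nlinarith [(k.cast_nonneg : (0 : ℝ) ≤ k)]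
  have card_sq_le : 4 * #D ^ 2 ≤ ⌊z⌋₊ := Nat.le_floor (by rw [hD]; push_cast; exact hz)
  have prod_small : Real.log z ^ k ≤ ∏ p ∈ primesLE ⌊z⌋₊, singFactor D p :=
    log_pow_le_prod_primesLE_singFactor hD one_le fun p hp => hnu p (Nat.prime_of_mem_primesLE hp)
      ((Nat.le_floor_iff (by linarith)).1 (Nat.le_of_mem_primesLE hp))
  rw [singSeries_eq_tprod_singFactor]
  refine ge_of_tendsto (multipliable_singFactor D).hasProd ?_
  filter_upwards [eventually_ge_atTop ((primesLE ⌊z⌋₊).subtype Nat.Prime)] with T hT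
  let A : Finset ℕ := T.map (Function.Embedding.subtype Nat.Prime)
  have prime_of_mem : ∀ p ∈ A, p.Prime := fun p hp => T.property_of_mem_map_subtype hp
  have small_subset : primesLE ⌊z⌋₊ ⊆ A := fun p hp =>
    mem_map_of_mem _ (hT (mem_subtype.2 hp : (⟨p, Nat.prime_of_mem_primesLE hp⟩ : Nat.Primes) ∈ _))
  have prod_large : 1 / 2 ≤ ∏ p ∈ A \ primesLE ⌊z⌋₊, singFactor D p := by
    refine half_le_prod_singFactor card_sq_le
      (fun p hp => (prime_of_mem p (mem_sdiff.1 hp).1).one_lt) fun p hp => not_le.1 fun hle => ?_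
    obtain ⟨hpA, hp_small⟩ := mem_sdiff.1 hp
    exact hp_small (Nat.mem_primesLE.2 ⟨hle, prime_of_mem p hpA⟩)
  calc 1 / 2 * Real.log z ^ k
      ≤ (∏ p ∈ A \ primesLE ⌊z⌋₊, singFactor D p) * ∏ p ∈ primesLE ⌊z⌋₊, singFactor D p :=
        mul_le_mul prod_large prod_small (pow_nonneg (Real.log_nonneg one_le) k) (by linarith)
    _ = ∏ p ∈ A, singFactor D p := prod_sdiff small_subset
    _ = ∏ p ∈ T, singFactor D p := prod_map T _ _

lemma primorial'_eq_prod_primesBelow (n : ℕ) :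
    primorial' n = ∏ p ∈ (Nat.nth Nat.Prime n).primesBelow, p := by
  induction n with
  | zero => simp [primorial', Nat.nth_prime_zero_eq_two]
  | succ n ih =>
    have primesBelow_nth_succ : (Nat.nth Nat.Prime (n + 1)).primesBelow =
        insert (Nat.nth Nat.Prime n) (Nat.nth Nat.Prime n).primesBelow :=
      Nat.filter_range_nth_eq_insert_of_infinite Nat.infinite_setOfPred_prime n
    rw [primesBelow_nth_succ, prod_insert (Nat.notMem_primesBelow _), ← ih, primorial',
      prod_range_succ_comm, primorial']

lemma primorial'_succ (n : ℕ) : primorial' (n + 1) = primorial (Nat.nth Nat.Prime n) := by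
  rw [primorial_eq_prod_primesLE, primesLE, Nat.primesBelow_succ, if_pos (Nat.prime_nth_prime n),
    prod_insert (Nat.notMem_primesBelow _), ← primorial'_eq_prod_primesBelow, primorial',
    prod_range_succ_comm, primorial']

lemma two_pow_le_primorial' (n : ℕ) : 2 ^ n ≤ primorial' n := by
  simpa [primorial'] using pow_card_le_prod (range n) (Nat.nth Nat.Prime) 2
    fun i _ => (Nat.prime_nth_prime i).two_le

lemma largestPrimorial_pos (y : ℝ) : 0 < largestPrimorial y :=
  (Nat.two_pow_pos _).trans_le (two_pow_le_primorial' _)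

lemma lt_primorial'_sSup_add_one (y : ℝ) :
    y < primorial' (sSup {n : ℕ | (primorial' n : ℝ) ≤ y} + 1) := by
  have bddAbove : BddAbove {n : ℕ | (primorial' n : ℝ) ≤ y} :=
    ⟨⌊y⌋₊, fun n hn => Nat.le_floor <|
      (Nat.cast_le.2 (Nat.lt_two_pow_self.le.trans (two_pow_le_primorial' n))).trans hn⟩
  have notMem : sSup {n : ℕ | (primorial' n : ℝ) ≤ y} + 1 ∉ {n : ℕ | (primorial' n : ℝ) ≤ y} :=
    notMem_of_csSup_lt (Nat.lt_succ_self _) bddAbove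
  exact not_le.1 notMem

lemma dvd_largestPrimorial_of_four_pow_le {p : ℕ} {y : ℝ} (hp : p.Prime) (h : 4 ^ p ≤ y) :
    p ∣ largestPrimorial y := by
  set N := sSup {n : ℕ | (primorial' n : ℝ) ≤ y} with hN
  have four_pow_lt : 4 ^ p < 4 ^ Nat.nth Nat.Prime N := by
    refine lt_of_lt_of_le ?_ (primorial_le_four_pow _)
    rw [← primorial'_succ]
    exact_mod_cast h.trans_lt (lt_primorial'_sSup_add_one y)
  rw [largestPrimorial, ← hN, primorial'_eq_prod_primesBelow]
  have lt_nth : p < Nat.nth Nat.Prime N := (Nat.pow_lt_pow_iff_right (by norm_num)).1 four_pow_lt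
  exact dvd_prod_of_mem _ (Nat.mem_primesBelow.2 ⟨lt_nth, hp⟩)

lemma dvd_largestPrimorial_of_le_half_log {p : ℕ} {y : ℝ} (hp : p.Prime) (hy : 0 < y)
    (h : p ≤ Real.log y / 2) : p ∣ largestPrimorial y := by
  have log_four_le_two : Real.log 4 ≤ 2 := by
    rw [show (4 : ℝ) = 2 ^ 2 by norm_num, Real.log_pow]
    push_cast
    linarith [Real.log_two_lt_d9]
  refine dvd_largestPrimorial_of_four_pow_le hp ((Real.pow_le_iff_le_log four_pos hy).2 ?_)
  nlinarith [(p.cast_nonneg : (0 : ℝ) ≤ p)]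

lemma card_insert_zero_image_mul {K : Finset ℕ} {d : ℕ} (hK : 0 ∉ K) (hd : 0 < d) :
    #(insert 0 (K.image fun i => i * d)) = #K + 1 := by
  rw [card_insert_of_notMem, card_image_of_injective K (mul_left_injective₀ hd.ne')]
  simpa [hd.ne'] using hK

lemma half_mul_log_pow_le_singSeries_largestPrimorial {K : Finset ℕ} {y : ℝ} (hK : 0 ∉ K)
    (hy : 0 < y) (hKy : 4 * ((#K : ℝ) + 1) ^ 2 ≤ Real.log y / 2) :
    1 / 2 * Real.log (Real.log y / 2) ^ #K ≤
      singSeries (insert 0 (K.image fun i => i * largestPrimorial y)) := by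
  refine half_mul_log_pow_le_singSeries (card_insert_zero_image_mul hK (largestPrimorial_pos y))
    hKy fun p hp hpy => nu_eq_one_of_forall_dvd (insert_nonempty _ _) ?_
  have hdvd := dvd_largestPrimorial_of_le_half_log hp hy hpy
  simpa using fun i _ => hdvd.mul_left i

lemma half_log_le_log_div_four {L : ℝ} (hL : 16 ≤ L) :
    1 / 2 * Real.log L ≤ Real.log (L / 4) := by
  have four_le_sqrt : 4 ≤ √L := Real.le_sqrt_of_sq_le (by linarith)
  calc 1 / 2 * Real.log L = Real.log √L := by rw [Real.log_sqrt (by linarith)]; ring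
    _ ≤ Real.log (L / 4) := by
        refine Real.log_le_log (by positivity) ?_
        nlinarith [Real.mul_self_sqrt (show 0 ≤ L by linarith)]

theorem stmt11_general (K : Finset ℕ) (hK : 0 ∉ K) :
    ∃ c : ℝ, 0 < c ∧ ∃ X : ℝ, ∀ x : ℝ, X ≤ x →
      c * Real.log (Real.log (Real.log x)) ^ #K ≤
        singSeries (insert 0 (K.image fun i => i * largestPrimorial √(Real.log x))) := by
  refine ⟨1 / 2 * (1 / 2) ^ #K, by positivity, eventually_atTop.1 ?_⟩
  have tendsto_log_log := Real.tendsto_log_atTop.comp Real.tendsto_log_atTop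
  filter_upwards [Real.tendsto_log_atTop.eventually_gt_atTop 0,
    tendsto_log_log.eventually_ge_atTop (16 * ((#K : ℝ) + 1) ^ 2)] with x hlog hL
  rw [Function.comp_apply] at hL
  set L := Real.log (Real.log x)
  have half_log_sqrt : Real.log √(Real.log x) / 2 = L / 4 := by
    rw [Real.log_sqrt hlog.le]; ring
  have sixteen_le : 16 ≤ L := by nlinarith [((#K).cast_nonneg : (0 : ℝ) ≤ #K)]
  calc 1 / 2 * (1 / 2) ^ #K * Real.log L ^ #K = 1 / 2 * (1 / 2 * Real.log L) ^ #K := by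
        rw [mul_pow, mul_assoc]
    _ ≤ 1 / 2 * Real.log (L / 4) ^ #K := by
        have : 0 ≤ Real.log L := Real.log_nonneg (by linarith)
        gcongr
        exact half_log_le_log_div_four sixteen_le
    _ ≤ _ := by
        rw [← half_log_sqrt]
        exact half_mul_log_pow_le_singSeries_largestPrimorial hK (Real.sqrt_pos.2 hlog)
          (by rw [half_log_sqrt]; linarith)

/-- `S({0} ∪ P(√(log x))·K) ≫ (log log log x)^k`. -/
theorem stmt11 (k : ℕ) (hk : 1 ≤ k) :
    ∃ c : ℝ, 0 < c ∧ ∃ X : ℝ, ∀ x : ℝ, X ≤ x →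
      c * (Real.log (Real.log (Real.log x))) ^ k ≤
        singSeries (insert 0 ((Finset.Icc 1 k).image
          (fun i => i * largestPrimorial (Real.sqrt (Real.log x))))) := by
  simpa using stmt11_general (Icc 1 k) (by simp)
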